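/- arXiv:1312.7729 — 2 statements merged into one kernel-verified Lean document; each statement's English description precedes it below -/
import Mathlib

section
/- For a,b odd positive integers, real q with 0<q<1, a complex number s, a real x>0, a positive integer r, and a Dirichlet character χ of odd conductor d, the following symmetry identity holds: [2]_{q^b}^r · [b]_q^s · Σ_{j_1,...,j_r=0}^{da-1} (-1)^{j_1+⋯+j_r} (Π_{l=1}^r χ(j_l)) q^{b(j_1+⋯+j_r)} l_{q^a,r}(s, bx + (b/a)(j_1+⋯+j_r) | χ) = [2]_{q^a}^r · [a]_q^s · Σ_{j_1,...,j_r=0}^{db-1} (-1)^{j_1+⋯+j_r} (Π_{l=1}^r χ(j_l)) q^{a(j_1+⋯+j_r)} l_{q^b,r}(s, ax + (a/b)(j_1+⋯+j_r) | χ). Here powers with complex exponent s are taken of positive real bases. -/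
open scoped BigOperators

/-- The `q`-number `[x]_q = (1 - q^x)/(1 - q)` for real `q` and real `x`. -/
noncomputable def qNum (q x : ℝ) : ℝ := (1 - q ^ x) / (1 - q)

/-- Generalized `q`-Euler polynomial of order `r` attached to a Dirichlet character `χ`:
`E^{(r)}_{n,χ,q}(x) = [2]_q^r Σ' (-q)^{m₁+⋯+m_r} (Π χ(mᵢ)) [m₁+⋯+m_r+x]_q^n`. -/
noncomputable def qEuler (r : ℕ) {d : ℕ} (χ : DirichletCharacter ℂ d) (q : ℝ)
    (n : ℕ) (x : ℝ) : ℂ :=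
  ((qNum q 2 : ℝ) : ℂ) ^ r *
    ∑' m : Fin r → ℕ,
      ((-(q : ℂ)) ^ (∑ i, m i) * (∏ i, χ ((m i : ZMod d))) *
        ((qNum q ((∑ i, m i : ℕ) + x) : ℝ) : ℂ) ^ n)

/-- Dirichlet-type multiple `q`-`l`-function
`l_{q,r}(s,x|χ) = [2]_q^r Σ' (-q)^{m₁+⋯+m_r} (Π χ(mᵢ)) [m₁+⋯+m_r+x]_q^{-s}`,
with principal complex powers of positive real bases. -/
noncomputable def qL (q : ℝ) (r : ℕ) {d : ℕ} (χ : DirichletCharacter ℂ d)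
    (s : ℂ) (x : ℝ) : ℂ :=
  ((qNum q 2 : ℝ) : ℂ) ^ r *
    ∑' m : Fin r → ℕ,
      ((-(q : ℂ)) ^ (∑ i, m i) * (∏ i, χ ((m i : ZMod d))) *
        ((qNum q ((∑ i, m i : ℕ) + x) : ℝ) : ℂ) ^ (-s))

/-- The `q`-power sum
`S^{(r)}_{n,i,q}(a|χ) = Σ_{j₁,…,j_r=0}^{a-1} (-1)^{j₁+⋯+j_r} (Π χ(j_l)) q^{(j₁+⋯+j_r)(n-i+1)} [j₁+⋯+j_r]_q^i`. -/
noncomputable def qS (r : ℕ) {d : ℕ} (χ : DirichletCharacter ℂ d)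
    (n i : ℕ) (q : ℝ) (a : ℕ) : ℂ :=
  ∑ j ∈ Fintype.piFinset (fun _ : Fin r => Finset.range a),
    ((-1 : ℂ) ^ (∑ l, j l) * (∏ l, χ ((j l : ZMod d))) *
      (q : ℂ) ^ ((∑ l, j l) * (n - i + 1)) *
      ((qNum q ((∑ l, j l : ℕ)) : ℝ) : ℂ) ^ i)

/-!
Multiplicativity `[a y]_q = [a]_q [y]_{q^a}` turns every `l`-value on the left-hand side into a
series in base `q`, so that, up to factors symmetric in `a` and `b`, the left-hand side is the sum
over `j ∈ [0, da)^r` and `m ∈ ℕ^r` of `w(j) w(m) φ(a|m| + b|j|)`, where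
`w(m) = (-1)^|m| ∏ χ(mᵢ)` and `φ(k) = q^k [abx + k]_q^{-s}`. Splitting `m = db n + i` with
`i ∈ [0, db)^r`, the argument of `φ` becomes `dab|n| + a|i| + b|j|`, while the weights become
`(-1)^(db|n|) w(i) w(j)`. As `da` and `db` have the same parity, everything is invariant under
exchanging `(a, i)` with `(b, j)`.
-/

section ResidueClasses

variable {ι : Type*} [Fintype ι] [DecidableEq ι]

lemma sum_piFinset_range {M : Type*} [AddCommMonoid M] (N : ℕ) (f : (ι → ℕ) → M) :
    ∑ j ∈ Fintype.piFinset (fun _ : ι ↦ Finset.range N), f j =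
      ∑ j : ι → Fin N, f (fun l ↦ j l) := by
  symm
  refine Finset.sum_nbij (fun j l ↦ (j l : ℕ)) (by simp) ?_ ?_ (by simp)
  · exact fun j _ k _ h ↦ funext fun l ↦ Fin.ext (congrFun h l)
  · intro j hj
    have hlt : ∀ l, j l < N := by simpa using hj
    exact ⟨fun l ↦ ⟨j l, hlt l⟩, by simp, rfl⟩

variable {E : Type*} [AddCommGroup E] [UniformSpace E] [IsUniformAddGroup E] [CompleteSpace E]
  [T0Space E]

lemma tsum_eq_sum_residues_tsum {N : ℕ} (hN : N ≠ 0) {f : (ι → ℕ) → E} (hf : Summable f) :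
    ∑' m, f m =
      ∑ i ∈ Fintype.piFinset (fun _ : ι ↦ Finset.range N), ∑' n : ι → ℕ, f (N • n + i) := by
  have : NeZero N := ⟨hN⟩
  let e : (ι → ℕ) ≃ (ι → Fin N) × (ι → ℕ) :=
    ((Equiv.piCongrRight fun _ : ι ↦ Nat.divModEquiv N).trans
      (Equiv.arrowProdEquivProdArrow ι (fun _ ↦ ℕ) (fun _ ↦ Fin N))).trans (Equiv.prodComm _ _)
  have he (i : ι → Fin N) (n : ι → ℕ) : e.symm (i, n) = N • n + fun l ↦ (i l : ℕ) :=
    funext fun l ↦ congrArg (· + (i l : ℕ)) (mul_comm (n l) N)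
  have hfe : Summable fun p ↦ f (e.symm p) := e.symm.summable_iff.2 hf
  rw [← e.symm.tsum_eq f, hfe.tsum_prod, tsum_fintype, sum_piFinset_range]
  simp only [he]

lemma sum_residues_tsum_comm {A B : ℕ} (hA : A ≠ 0) (hB : B ≠ 0)
    {F G : (ι → ℕ) → (ι → ℕ) → E} (hF : ∀ j, Summable (F j)) (hG : ∀ i, Summable (G i))
    (hFG : ∀ i j n, F j (B • n + i) = G i (A • n + j)) :
    ∑ j ∈ Fintype.piFinset (fun _ : ι ↦ Finset.range A), ∑' m, F j m =
      ∑ i ∈ Fintype.piFinset (fun _ : ι ↦ Finset.range B), ∑' m, G i m := by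
  simp only [fun j ↦ tsum_eq_sum_residues_tsum hB (hF j),
    fun i ↦ tsum_eq_sum_residues_tsum hA (hG i), hFG]
  exact Finset.sum_comm

end ResidueClasses

section Summability

variable {ι : Type*} [Fintype ι]

lemma summable_prod_apply_of_nonneg {κ : ι → Type*} {f : ∀ i, κ i → ℝ} (hf₀ : ∀ i k, 0 ≤ f i k)
    (hf : ∀ i, Summable (f i)) : Summable fun m : ∀ i, κ i ↦ ∏ i, f i (m i) := by
  classical
  refine summable_of_sum_le (c := ∏ i, ∑' k, f i k)
    (fun m ↦ Finset.prod_nonneg fun i _ ↦ hf₀ i (m i)) fun u ↦ ?_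
  have hu : u ⊆ Fintype.piFinset fun i ↦ u.image (· i) := fun m hm ↦
    Fintype.mem_piFinset.2 fun i ↦ Finset.mem_image_of_mem (· i) hm
  calc ∑ m ∈ u, ∏ i, f i (m i)
      ≤ ∑ m ∈ Fintype.piFinset fun i ↦ u.image (· i), ∏ i, f i (m i) :=
        Finset.sum_le_sum_of_subset_of_nonneg hu fun m _ _ ↦
          Finset.prod_nonneg fun i _ ↦ hf₀ i (m i)
    _ = ∏ i, ∑ k ∈ u.image (· i), f i k := (Finset.prod_univ_sum _ _).symm
    _ ≤ ∏ i, ∑' k, f i k :=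
        Finset.prod_le_prod (fun i _ ↦ Finset.sum_nonneg fun k _ ↦ hf₀ i k) fun i _ ↦
          (hf i).sum_le_tsum _ fun k _ ↦ hf₀ i k

lemma summable_pow_sum {q : ℝ} (hq0 : 0 ≤ q) (hq1 : q < 1) :
    Summable fun m : ι → ℕ ↦ q ^ ∑ i, m i := by
  simp only [← Finset.prod_pow_eq_pow_sum]
  exact summable_prod_apply_of_nonneg (fun _ k ↦ pow_nonneg hq0 k)
    fun _ ↦ summable_geometric_of_lt_one hq0 hq1

end Summability

section AlternatingCharacter

variable {ι : Type*} [Fintype ι] {d : ℕ} (χ : DirichletCharacter ℂ d)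

/-- The weight `(-1)^(m₁+⋯+m_r) χ(m₁)⋯χ(m_r)` of a multi-index, through which both the finite sums
over `j` and the series defining `qL` depend on the character. -/
noncomputable def altCharProd (m : ι → ℕ) : ℂ :=
  (-1) ^ (∑ i, m i) * ∏ i, χ (m i : ZMod d)

lemma norm_altCharProd_le_one (m : ι → ℕ) : ‖altCharProd χ m‖ ≤ 1 := by
  simpa [altCharProd] using
    Finset.prod_le_one (fun i _ ↦ norm_nonneg (χ (m i : ZMod d))) fun i _ ↦ χ.norm_le_one _

lemma altCharProd_smul_add {N : ℕ} (hN : d ∣ N) (n i : ι → ℕ) :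
    altCharProd χ (N • n + i) = ((-1) ^ N) ^ (∑ l, n l) * altCharProd χ i := by
  have hN₀ : (N : ZMod d) = 0 := (ZMod.natCast_eq_zero_iff N d).2 hN
  simp only [altCharProd, Pi.add_apply, Pi.smul_apply, smul_eq_mul, Finset.sum_add_distrib,
    ← Finset.mul_sum, Nat.cast_add, Nat.cast_mul, hN₀, zero_mul, zero_add, pow_add, pow_mul,
    mul_assoc]

lemma summable_altCharProd_mul {φ : ℕ → ℂ} {C ρ : ℝ} (hρ0 : 0 ≤ ρ) (hρ1 : ρ < 1)
    (hφ : ∀ k, ‖φ k‖ ≤ C * ρ ^ k) {c : ℕ} (hc : c ≠ 0) (k : ℕ) :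
    Summable fun m : ι → ℕ ↦ altCharProd χ m * φ (c * ∑ i, m i + k) := by
  have hgeom : Summable fun m : ι → ℕ ↦ (ρ ^ c) ^ ∑ i, m i :=
    summable_pow_sum (pow_nonneg hρ0 c) (pow_lt_one₀ hρ0 hρ1 hc)
  refine .of_norm_bounded (hgeom.mul_left (C * ρ ^ k)) fun m ↦ ?_
  calc ‖altCharProd χ m * φ (c * ∑ i, m i + k)‖
      ≤ 1 * (C * ρ ^ (c * ∑ i, m i + k)) :=
        norm_mul_le_of_le (norm_altCharProd_le_one χ m) (hφ _)
    _ = C * ρ ^ k * (ρ ^ c) ^ ∑ i, m i := by ring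

theorem sum_tsum_altCharProd_symm [DecidableEq ι] {φ : ℕ → ℂ} {C ρ : ℝ} (hρ0 : 0 ≤ ρ)
    (hρ1 : ρ < 1) (hφ : ∀ k, ‖φ k‖ ≤ C * ρ ^ k) {a b : ℕ} (ha : a ≠ 0) (hb : b ≠ 0) (hd : d ≠ 0)
    (hab : Even (d * a) ↔ Even (d * b)) :
    ∑ j ∈ Fintype.piFinset (fun _ : ι ↦ Finset.range (d * a)),
        ∑' m : ι → ℕ, altCharProd χ j * (altCharProd χ m * φ (a * ∑ l, m l + b * ∑ l, j l)) =
      ∑ i ∈ Fintype.piFinset (fun _ : ι ↦ Finset.range (d * b)),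
        ∑' m : ι → ℕ, altCharProd χ i * (altCharProd χ m * φ (b * ∑ l, m l + a * ∑ l, i l)) := by
  refine sum_residues_tsum_comm (mul_ne_zero hd ha) (mul_ne_zero hd hb)
    (fun j ↦ (summable_altCharProd_mul χ hρ0 hρ1 hφ ha _).mul_left _)
    (fun i ↦ (summable_altCharProd_mul χ hρ0 hρ1 hφ hb _).mul_left _) fun i j n ↦ ?_
  have hsign : (-1 : ℂ) ^ (d * a) = (-1) ^ (d * b) := neg_one_pow_congr hab
  have hsum (c : ℕ) (k : ι → ℕ) : ∑ l, (c • n + k) l = c * ∑ l, n l + ∑ l, k l := by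
    simp [Finset.sum_add_distrib, Finset.mul_sum]
  have harg : a * (d * b * ∑ l, n l + ∑ l, i l) + b * ∑ l, j l =
      b * (d * a * ∑ l, n l + ∑ l, j l) + a * ∑ l, i l := by ring
  rw [altCharProd_smul_add χ (dvd_mul_right d b), altCharProd_smul_add χ (dvd_mul_right d a),
    hsum, hsum, harg, hsign]
  ring

end AlternatingCharacter

section QNumber

variable {q : ℝ}

lemma qNum_pos (hq0 : 0 ≤ q) (hq1 : q < 1) {x : ℝ} (hx : 0 < x) : 0 < qNum q x :=
  div_pos (sub_pos.2 (Real.rpow_lt_one hq0 hq1 hx)) (sub_pos.2 hq1)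

lemma qNum_le_qNum (hq0 : 0 < q) (hq1 : q < 1) {x y : ℝ} (hxy : x ≤ y) :
    qNum q x ≤ qNum q y :=
  div_le_div_of_nonneg_right
    (sub_le_sub_left (Real.rpow_le_rpow_of_exponent_ge hq0 hq1.le hxy) 1) (sub_pos.2 hq1).le

lemma qNum_le_one_div_one_sub (hq0 : 0 ≤ q) (hq1 : q < 1) (x : ℝ) : qNum q x ≤ 1 / (1 - q) :=
  div_le_div_of_nonneg_right (sub_le_self 1 (Real.rpow_nonneg hq0 x)) (sub_pos.2 hq1).le

lemma qNum_natCast_mul (hq0 : 0 ≤ q) {a : ℕ} (hqa : q ^ a ≠ 1) (x : ℝ) :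
    qNum q (a * x) = qNum q a * qNum (q ^ a) x := by
  have hqa' : 1 - q ^ a ≠ 0 := sub_ne_zero.2 hqa.symm
  rw [qNum, qNum, qNum, Real.rpow_mul hq0, Real.rpow_natCast, mul_comm, div_mul_div_cancel₀ hqa']

end QNumber

section Kernel

variable {q : ℝ}

/-- The factor `q^k [k + x]_q^{-s}` of the term of `qL` at a multi-index of total degree `k`. Its
sign `(-1)^k` is part of `altCharProd`. -/
noncomputable def qKernel (q : ℝ) (s : ℂ) (x : ℝ) (k : ℕ) : ℂ :=
  (q : ℂ) ^ k * ((qNum q (k + x) : ℝ) : ℂ) ^ (-s)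

lemma qL_eq_tsum_altCharProd_mul_qKernel (q : ℝ) (r : ℕ) {d : ℕ} (χ : DirichletCharacter ℂ d)
    (s : ℂ) (x : ℝ) :
    qL q r χ s x = ((qNum q 2 : ℝ) : ℂ) ^ r *
      ∑' m : Fin r → ℕ, altCharProd χ m * qKernel q s x (∑ l, m l) := by
  rw [qL]
  congr! 3 with m
  rw [altCharProd, qKernel, neg_pow]
  ring

lemma qKernel_add (q : ℝ) (s : ℂ) (x : ℝ) (k c : ℕ) :
    qKernel q s x (k + c) = (q : ℂ) ^ c * qKernel q s (x + c) k := by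
  have hshift : ((k + c : ℕ) : ℝ) + x = k + (x + c) := by push_cast; ring
  rw [qKernel, qKernel, hshift, pow_add]
  ring

lemma qKernel_pow (hq0 : 0 ≤ q) (hq1 : q < 1) {a : ℕ} (ha : a ≠ 0) (s : ℂ) {x : ℝ} (hx : 0 < x)
    (k : ℕ) :
    qKernel (q ^ a) s x k = ((qNum q a : ℝ) : ℂ) ^ s * qKernel q s (a * x) (a * k) := by
  have hqa : q ^ a < 1 := pow_lt_one₀ hq0 hq1 ha
  have hNa : 0 < qNum q a := qNum_pos hq0 hq1 (by positivity)
  have hNx : 0 < qNum (q ^ a) (k + x) := qNum_pos (pow_nonneg hq0 a) hqa (by positivity)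
  have hmul : qNum q ((a * k : ℕ) + a * x) = qNum q a * qNum (q ^ a) (k + x) := by
    rw [Nat.cast_mul, ← mul_add, qNum_natCast_mul hq0 hqa.ne]
  have hcancel : ((qNum q a : ℝ) : ℂ) ^ s * ((qNum q a : ℝ) : ℂ) ^ (-s) = 1 := by
    rw [← Complex.cpow_add _ _ (Complex.ofReal_ne_zero.2 hNa.ne'), add_neg_cancel,
      Complex.cpow_zero]
  rw [qKernel, qKernel, hmul, Complex.ofReal_mul, Complex.mul_cpow_ofReal_nonneg hNa.le hNx.le,
    Complex.ofReal_pow, ← pow_mul, mul_left_comm, ← mul_assoc (_ ^ s), hcancel, one_mul]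

lemma exists_norm_qKernel_le (hq0 : 0 < q) (hq1 : q < 1) (s : ℂ) {x : ℝ} (hx : 0 < x) :
    ∃ C : ℝ, ∀ k, ‖qKernel q s x k‖ ≤ C * q ^ k := by
  have hcont : ContinuousOn (fun y : ℝ ↦ (y : ℂ) ^ (-s)) (Set.Icc (qNum q x) (1 / (1 - q))) :=
    fun y hy ↦ (Complex.continuousAt_ofReal_cpow_const y (-s)
      (.inr ((qNum_pos hq0.le hq1 hx).trans_le hy.1).ne')).continuousWithinAt
  obtain ⟨C, hC⟩ := isCompact_Icc.exists_bound_of_continuousOn hcont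
  refine ⟨C, fun k ↦ ?_⟩
  have hmem : qNum q (k + x) ∈ Set.Icc (qNum q x) (1 / (1 - q)) :=
    ⟨qNum_le_qNum hq0 hq1 (le_add_of_nonneg_left k.cast_nonneg),
      qNum_le_one_div_one_sub hq0.le hq1 _⟩
  rw [qKernel, norm_mul, norm_pow, Complex.norm_of_nonneg hq0.le, mul_comm]
  exact mul_le_mul_of_nonneg_right (hC _ hmem) (pow_nonneg hq0.le k)

end Kernel

section Symmetry

variable {q : ℝ} {a b r d : ℕ} (χ : DirichletCharacter ℂ d)

lemma pow_mul_qL_pow (hq0 : 0 ≤ q) (hq1 : q < 1) (ha : a ≠ 0) (hb : b ≠ 0) (s : ℂ) {x : ℝ}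
    (hx : 0 < x) (k : ℕ) :
    (q : ℂ) ^ (b * k) * qL (q ^ a) r χ s (b * x + (b : ℝ) / a * k) =
      ((qNum (q ^ a) 2 : ℝ) : ℂ) ^ r * ((qNum q a : ℝ) : ℂ) ^ s *
        ∑' m : Fin r → ℕ, altCharProd χ m * qKernel q s (a * b * x) (a * ∑ l, m l + b * k) := by
  have hy : 0 < b * x + (b : ℝ) / a * k := by positivity
  have hay : a * (b * x + (b : ℝ) / a * k) = a * b * x + (b * k : ℕ) := by
    push_cast
    field_simp
  simp only [qL_eq_tsum_altCharProd_mul_qKernel, qKernel_pow hq0 hq1 ha s hy, hay, qKernel_add,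
    mul_left_comm (altCharProd χ _), tsum_mul_left]
  ring

lemma sum_mul_qL_pow (hq0 : 0 ≤ q) (hq1 : q < 1) (ha : a ≠ 0) (hb : b ≠ 0) (s : ℂ) {x : ℝ}
    (hx : 0 < x) (S : Finset (Fin r → ℕ)) :
    ∑ j ∈ S, ((-1 : ℂ) ^ (∑ l, j l) * (∏ l, χ ((j l : ZMod d))) * (q : ℂ) ^ (b * ∑ l, j l) *
        qL (q ^ a) r χ s (b * x + ((b : ℝ) / a) * (∑ l, j l))) =
      ((qNum (q ^ a) 2 : ℝ) : ℂ) ^ r * ((qNum q a : ℝ) : ℂ) ^ s *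
        ∑ j ∈ S, ∑' m : Fin r → ℕ, altCharProd χ j *
          (altCharProd χ m * qKernel q s (a * b * x) (a * ∑ l, m l + b * ∑ l, j l)) := by
  rw [Finset.mul_sum]
  refine Finset.sum_congr rfl fun j _ ↦ ?_
  rw [mul_assoc, pow_mul_qL_pow χ hq0 hq1 ha hb s hx, tsum_mul_left, altCharProd]
  ring

end Symmetry

theorem symmetry_qL_general (a b : ℕ) (ha : a ≠ 0) (hb : b ≠ 0) (q : ℝ) (hq0 : 0 < q) (hq1 : q < 1)
    (s : ℂ) (x : ℝ) (hx : 0 < x) (r d : ℕ) (hd : d ≠ 0) (hab : Even (d * a) ↔ Even (d * b))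
    (χ : DirichletCharacter ℂ d) :
    ((qNum (q ^ b) 2 : ℝ) : ℂ) ^ r * ((qNum q b : ℝ) : ℂ) ^ s *
      ∑ j ∈ Fintype.piFinset (fun _ : Fin r => Finset.range (d * a)),
        ((-1 : ℂ) ^ (∑ l, j l) * (∏ l, χ ((j l : ZMod d))) * (q : ℂ) ^ (b * ∑ l, j l) *
          qL (q ^ a) r χ s (b * x + ((b : ℝ) / a) * (∑ l, j l))) =
    ((qNum (q ^ a) 2 : ℝ) : ℂ) ^ r * ((qNum q a : ℝ) : ℂ) ^ s *
      ∑ j ∈ Fintype.piFinset (fun _ : Fin r => Finset.range (d * b)),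
        ((-1 : ℂ) ^ (∑ l, j l) * (∏ l, χ ((j l : ZMod d))) * (q : ℂ) ^ (a * ∑ l, j l) *
          qL (q ^ b) r χ s (a * x + ((a : ℝ) / b) * (∑ l, j l))) := by
  have hab0 : 0 < a * b * x := by positivity
  obtain ⟨C, hC⟩ := exists_norm_qKernel_le hq0 hq1 s hab0
  rw [sum_mul_qL_pow χ hq0.le hq1 ha hb s hx, sum_mul_qL_pow χ hq0.le hq1 hb ha s hx,
    sum_tsum_altCharProd_symm χ hq0.le hq1 hC ha hb hd hab, mul_comm (b : ℝ) a]
  ring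

/-- Theorem 1: symmetry identity for the Dirichlet-type multiple `q`-`l`-function. -/
theorem symmetry_qL (a b : ℕ) (ha0 : 0 < a) (ha : Odd a) (hb0 : 0 < b) (hb : Odd b)
    (q : ℝ) (hq0 : 0 < q) (hq1 : q < 1) (s : ℂ) (x : ℝ) (hx : 0 < x)
    (r : ℕ) (hr : 0 < r) (d : ℕ) (hd : Odd d) (χ : DirichletCharacter ℂ d) :
    ((qNum (q ^ b) 2 : ℝ) : ℂ) ^ r * ((qNum q b : ℝ) : ℂ) ^ s *
      ∑ j ∈ Fintype.piFinset (fun _ : Fin r => Finset.range (d * a)),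
        ((-1 : ℂ) ^ (∑ l, j l) * (∏ l, χ ((j l : ZMod d))) * (q : ℂ) ^ (b * ∑ l, j l) *
          qL (q ^ a) r χ s (b * x + ((b : ℝ) / a) * (∑ l, j l))) =
    ((qNum (q ^ a) 2 : ℝ) : ℂ) ^ r * ((qNum q a : ℝ) : ℂ) ^ s *
      ∑ j ∈ Fintype.piFinset (fun _ : Fin r => Finset.range (d * b)),
        ((-1 : ℂ) ^ (∑ l, j l) * (∏ l, χ ((j l : ZMod d))) * (q : ℂ) ^ (a * ∑ l, j l) *
          qL (q ^ b) r χ s (a * x + ((a : ℝ) / b) * (∑ l, j l))) := by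
  exact symmetry_qL_general a b ha0.ne' hb0.ne' q hq0 hq1 s x hx r d hd.pos.ne'
    (iff_of_false (Nat.not_even_iff_odd.2 (hd.mul ha)) (Nat.not_even_iff_odd.2 (hd.mul hb))) χ
end

section
/- For real q with 0<q<1, a positive integer r, a Dirichlet character χ of odd conductor d, a nonnegative integer n, and real x, the generalized q-Euler polynomial satisfies E^{(r)}_{n,χ,q}(x) = Σ_{l=0}^{n} C(n,l) q^{l·x} E^{(r)}_{l,χ,q}(0) [x]_q^{n-l}, where C(n,l) is the binomial coefficient. -/
open scoped BigOperators

/-!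
The `q`-number satisfies the twisted addition rule `[y + x]_q = q^x [y]_q + [x]_q`, so the binomial
theorem expands every term `[m₁ + ⋯ + m_r + x]_q^n` of the defining series. The resulting finite sum
may be exchanged with the series because the weights `(-q)^(m₁ + ⋯ + m_r) ∏ χ(mᵢ)` are dominated by
a product of geometric series, while `[y]_q` stays bounded for `y ≥ 0`.
-/

section qNum

variable {q : ℝ}

theorem qNum_add (hq : 0 < q) (y x : ℝ) : qNum q (y + x) = q ^ x * qNum q y + qNum q x := by
  simp only [qNum, Real.rpow_add hq]
  ring

theorem qNum_add_pow (hq : 0 < q) (y x : ℝ) (n : ℕ) :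
    qNum q (y + x) ^ n =
      ∑ l ∈ Finset.range (n + 1),
        n.choose l * q ^ (l * x) * qNum q y ^ l * qNum q x ^ (n - l) := by
  rw [qNum_add hq, add_pow]
  refine Finset.sum_congr rfl fun l _ => ?_
  have rpow_mul_eq_pow : q ^ (l * x) = (q ^ x) ^ l := by
    rw [mul_comm, Real.rpow_mul_natCast hq.le]
  rw [rpow_mul_eq_pow, mul_pow]
  ring

theorem abs_qNum_le (hq0 : 0 ≤ q) (hq1 : q < 1) {y : ℝ} (hy : 0 ≤ y) :
    |qNum q y| ≤ (1 - q)⁻¹ := by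
  have one_sub_pos : 0 < 1 - q := sub_pos.mpr hq1
  have rpow_nonneg : 0 ≤ q ^ y := Real.rpow_nonneg hq0 y
  have rpow_le_one : q ^ y ≤ 1 := Real.rpow_le_one hq0 hq1.le hy
  rw [qNum, abs_of_nonneg (div_nonneg (sub_nonneg.mpr rpow_le_one) one_sub_pos.le),
    div_eq_mul_inv]
  exact mul_le_of_le_one_left (inv_nonneg.mpr one_sub_pos.le) (sub_le_self 1 rpow_nonneg)

end qNum

section WeightedSeries

variable {ι : Type*} {q : ℝ} {w : ι → ℂ} {y : ι → ℝ}

theorem summable_mul_qNum_pow (hq0 : 0 ≤ q) (hq1 : q < 1) (hw : Summable w) (hy : ∀ i, 0 ≤ y i)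
    (l : ℕ) : Summable fun i => w i * (qNum q (y i) : ℂ) ^ l := by
  refine Summable.of_norm_bounded (hw.norm.mul_right ((1 - q)⁻¹ ^ l)) fun i => ?_
  rw [norm_mul, norm_pow, Complex.norm_real, Real.norm_eq_abs]
  gcongr
  exact abs_qNum_le hq0 hq1 (hy i)

theorem tsum_mul_qNum_add_pow (hq : 0 < q) (x : ℝ) (n : ℕ)
    (hsum : ∀ l ≤ n, Summable fun i => w i * (qNum q (y i) : ℂ) ^ l) :
    ∑' i, w i * (qNum q (y i + x) : ℂ) ^ n =
      ∑ l ∈ Finset.range (n + 1),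
        (n.choose l : ℂ) * (q ^ (l * x) : ℝ) * (∑' i, w i * (qNum q (y i) : ℂ) ^ l) *
          (qNum q x : ℂ) ^ (n - l) := by
  have expand_term (i : ι) :
      w i * (qNum q (y i + x) : ℂ) ^ n =
        ∑ l ∈ Finset.range (n + 1),
          (n.choose l : ℂ) * (q ^ (l * x) : ℝ) * (w i * (qNum q (y i) : ℂ) ^ l) *
            (qNum q x : ℂ) ^ (n - l) := by
    rw [← Complex.ofReal_pow, qNum_add_pow hq, Complex.ofReal_sum, Finset.mul_sum]
    refine Finset.sum_congr rfl fun l _ => ?_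
    push_cast
    ring
  rw [tsum_congr expand_term, Summable.tsum_finsetSum fun l hl =>
    ((hsum l (Finset.mem_range_succ_iff.mp hl)).mul_left _).mul_right _]
  simp only [tsum_mul_left, tsum_mul_right]

end WeightedSeries

section ProductSeries

variable {ι : Type*} [Fintype ι]

theorem summable_pi_prod_of_nonneg {κ : ι → Type*} {f : ∀ i, κ i → ℝ}
    (hf0 : ∀ i k, 0 ≤ f i k) (hf : ∀ i, Summable (f i)) :
    Summable fun m : ∀ i, κ i => ∏ i, f i (m i) := by
  classical
  have prod_nonneg (m : ∀ i, κ i) : 0 ≤ ∏ i, f i (m i) := Finset.prod_nonneg fun i _ => hf0 i (m i)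
  refine summable_of_sum_le (c := ∏ i, ∑' k, f i k) prod_nonneg fun s => ?_
  have subset_box : s ⊆ Fintype.piFinset fun i => s.image fun m => m i := fun m hm =>
    Fintype.mem_piFinset.mpr fun i => Finset.mem_image_of_mem (fun m => m i) hm
  calc
    ∑ m ∈ s, ∏ i, f i (m i)
      ≤ ∑ m ∈ Fintype.piFinset fun i => s.image fun m => m i, ∏ i, f i (m i) :=
        Finset.sum_le_sum_of_subset_of_nonneg subset_box fun m _ _ => prod_nonneg m
    _ = ∏ i, ∑ k ∈ s.image fun m => m i, f i k := (Finset.prod_univ_sum _ _).symm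
    _ ≤ ∏ i, ∑' k, f i k :=
        Finset.prod_le_prod (fun i _ => Finset.sum_nonneg fun k _ => hf0 i k)
          fun i _ => (hf i).sum_le_tsum _ fun k _ => hf0 i k

theorem summable_pow_sum_mul_prod {F : Type*} [NormedField F] [CompleteSpace F] {z : F}
    (hz : ‖z‖ < 1) {a : ι → ℕ → F} (ha : ∀ i k, ‖a i k‖ ≤ 1) :
    Summable fun m : ι → ℕ => z ^ (∑ i, m i) * ∏ i, a i (m i) := by
  have summable_geometric : Summable fun m : ι → ℕ => ∏ i, ‖z‖ ^ m i :=
    summable_pi_prod_of_nonneg (fun _ k => pow_nonneg (norm_nonneg z) k)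
      fun _ => summable_geometric_of_lt_one (norm_nonneg z) hz
  refine Summable.of_norm_bounded summable_geometric fun m => ?_
  rw [norm_mul, norm_pow, norm_prod, Finset.prod_pow_eq_pow_sum]
  exact mul_le_of_le_one_right (by positivity)
    (Finset.prod_le_one (fun _ _ => norm_nonneg _) fun i _ => ha i (m i))

end ProductSeries

theorem qEuler_eq_sum_qEuler_num_general {q : ℝ} (hq0 : 0 < q) (hq1 : q < 1) (r : ℕ) {d : ℕ}
    (χ : DirichletCharacter ℂ d) (n : ℕ) (x : ℝ) :
    qEuler r χ q n x =
      ∑ l ∈ Finset.range (n + 1),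
        ((n.choose l : ℂ) * ((q ^ ((l : ℝ) * x) : ℝ) : ℂ) * qEuler r χ q l 0 *
          ((qNum q x : ℝ) : ℂ) ^ (n - l)) := by
  have norm_neg_q_lt_one : ‖-(q : ℂ)‖ < 1 := by
    rwa [norm_neg, Complex.norm_real, Real.norm_of_nonneg hq0.le]
  have summable_weight :
      Summable fun m : Fin r → ℕ => (-(q : ℂ)) ^ (∑ i, m i) * ∏ i, χ (m i : ZMod d) :=
    summable_pow_sum_mul_prod (a := fun _ k => χ (k : ZMod d)) norm_neg_q_lt_one
      fun _ k => χ.norm_le_one (k : ZMod d)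
  have summable_term (l : ℕ) :
      Summable fun m : Fin r → ℕ =>
        (-(q : ℂ)) ^ (∑ i, m i) * (∏ i, χ (m i : ZMod d)) * (qNum q (∑ i, m i : ℕ) : ℂ) ^ l :=
    summable_mul_qNum_pow hq0.le hq1 summable_weight (fun m => Nat.cast_nonneg (∑ i, m i)) l
  simp only [qEuler, add_zero]
  rw [tsum_mul_qNum_add_pow hq0 x n fun l _ => summable_term l, Finset.mul_sum]
  refine Finset.sum_congr rfl fun l _ => ?_
  ring

/-- Equation (5): expansion of the generalized `q`-Euler polynomial in terms of the
generalized `q`-Euler numbers. -/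
theorem qEuler_eq_sum_qEuler_num (q : ℝ) (hq0 : 0 < q) (hq1 : q < 1)
    (r : ℕ) (hr : 0 < r) (d : ℕ) (hd : Odd d) (χ : DirichletCharacter ℂ d)
    (n : ℕ) (x : ℝ) :
    qEuler r χ q n x =
      ∑ l ∈ Finset.range (n + 1),
        ((n.choose l : ℂ) * ((q ^ ((l : ℝ) * x) : ℝ) : ℂ) * qEuler r χ q l 0 *
          ((qNum q x : ℝ) : ℂ) ^ (n - l)) :=
  qEuler_eq_sum_qEuler_num_general hq0 hq1 r χ n x
end
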